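/- arXiv:1408.2981 — 7 statements merged into one kernel-verified Lean document; each statement's English description precedes it below -/
import Mathlib

section
/- Block inverse of a tensor-product sum. Let N, m ≥ 1 and let C, M be real N×N matrices. Suppose e_1,…,e_N ∈ ℝ^N and λ_1,…,λ_N ∈ ℝ satisfy C e_j = λ_j M e_j for all j and e_j^T M e_k = δ_{jk} for all j, k. Let X and Y be real m×m matrices such that λ_j X + Y is invertible for every j. Then the (N·m)×(N·m) matrix C ⊗ X + M ⊗ Y is invertible and its inverse is given by (C ⊗ X + M ⊗ Y)^{−1} = Σ_{j=1}^N (e_j e_j^T) ⊗ (λ_j X + Y)^{−1}. -/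
/-!
Multiplying the claimed inverse on the left by `C ⊗ X + M ⊗ Y`, the eigen-relation turns the `j`-th
term into `(M e_j e_jᵀ) ⊗ ((λ_j X + Y) (λ_j X + Y)⁻¹) = (M e_j e_jᵀ) ⊗ 1`. So it suffices that
`∑_j M e_j e_jᵀ = 1` (`sum_vecMulVec_mulVec_eq_one`): with `E` the matrix of columns `e_j`,
`M`-orthonormality reads `Eᵀ (M E) = 1`, and a left inverse of a square matrix is a right inverse,
so `(M E) Eᵀ = 1`.
-/

open Matrix
open scoped Kronecker

/-- Completeness relation: an `M`-orthonormal family of full size resolves the identity. -/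
lemma sum_vecMulVec_mulVec_eq_one {N : ℕ} (M : Matrix (Fin N) (Fin N) ℝ)
    (e : Fin N → Fin N → ℝ)
    (hortho : ∀ j k, e j ⬝ᵥ (M *ᵥ e k) = if j = k then (1 : ℝ) else 0) :
    ∑ j, vecMulVec (M *ᵥ e j) (e j) = 1 := by
  have h : of e * (of fun j => M *ᵥ e j)ᵀ = 1 := by
    ext j k
    simpa [Matrix.mul_apply, dotProduct, Matrix.one_apply] using hortho j k
  rw [← mul_eq_one_comm.mp h]
  ext i k
  simp [Matrix.mul_apply, Matrix.sum_apply, vecMulVec_apply]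

/-- **Block inverse of a tensor-product sum.**
Given generalized eigen-data `C e_j = λ_j M e_j`, `e_jᵀ M e_k = δ_{jk}`, and `m×m` matrices
`X`, `Y` with each `λ_j X + Y` invertible, the matrix `C ⊗ X + M ⊗ Y` is invertible with
inverse `∑_j (e_j e_jᵀ) ⊗ (λ_j X + Y)⁻¹`. -/
theorem kronecker_sum_inverse
    (N m : ℕ) (hN : 1 ≤ N) (hm : 1 ≤ m)
    (C M : Matrix (Fin N) (Fin N) ℝ)
    (e : Fin N → Fin N → ℝ) (lam : Fin N → ℝ)
    (heig : ∀ j, C *ᵥ e j = lam j • (M *ᵥ e j))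
    (hortho : ∀ j k, e j ⬝ᵥ (M *ᵥ e k) = if j = k then (1 : ℝ) else 0)
    (X Y : Matrix (Fin m) (Fin m) ℝ)
    (hinv : ∀ j, IsUnit (lam j • X + Y)) :
    IsUnit (C ⊗ₖ X + M ⊗ₖ Y) ∧
      (C ⊗ₖ X + M ⊗ₖ Y)⁻¹
        = ∑ j : Fin N, (vecMulVec (e j) (e j)) ⊗ₖ (lam j • X + Y)⁻¹ := by
  have key : (C ⊗ₖ X + M ⊗ₖ Y) *
      ∑ j : Fin N, (vecMulVec (e j) (e j)) ⊗ₖ (lam j • X + Y)⁻¹ = 1 := by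
    have hterm : ∀ j, (C ⊗ₖ X + M ⊗ₖ Y) * ((vecMulVec (e j) (e j)) ⊗ₖ (lam j • X + Y)⁻¹)
        = vecMulVec (M *ᵥ e j) (e j) ⊗ₖ (1 : Matrix (Fin m) (Fin m) ℝ) := by
      intro j
      rw [← Matrix.mul_nonsing_inv _ ((Matrix.isUnit_iff_isUnit_det _).mp (hinv j)),
        add_mul, ← mul_kronecker_mul, ← mul_kronecker_mul, mul_vecMulVec, mul_vecMulVec, heig,
        smul_vecMulVec, smul_kronecker, ← kronecker_smul, ← kronecker_add, ← smul_mul_assoc,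
        ← add_mul]
    rw [Finset.mul_sum, Finset.sum_congr rfl fun j _ => hterm j]
    have hsum : ∑ j, vecMulVec (M *ᵥ e j) (e j) ⊗ₖ (1 : Matrix (Fin m) (Fin m) ℝ)
        = (∑ j, vecMulVec (M *ᵥ e j) (e j)) ⊗ₖ (1 : Matrix (Fin m) (Fin m) ℝ) := by
      ext a b
      simp [Matrix.sum_apply, Finset.sum_mul]
    rw [hsum, sum_vecMulVec_mulVec_eq_one M e hortho, one_kronecker_one]
  exact ⟨IsUnit.of_mul_eq_one _ key, Matrix.inv_eq_right_inv key⟩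
end

section
/- Invariance of the vertical eigenspaces under the preconditioned operator. Let N, m ≥ 1 and let C, M be real N×N matrices with generalized eigen-data: vectors e_1,…,e_N ∈ ℝ^N and reals λ_1,…,λ_N such that C e_j = λ_j M e_j for all j and e_j^T M e_k = δ_{jk} for all j,k. Let X, Y, X', Y' be real m×m matrices such that λ_j X' + Y' is invertible for every j. Then for every j and every v ∈ ℝ^m: (C ⊗ X' + M ⊗ Y')^{−1}(C ⊗ X + M ⊗ Y)(e_j ⊗ v) = e_j ⊗ ((λ_j X' + Y')^{−1}(λ_j X + Y) v). -/
/-! On the subspace `span{e_j} ⊗ ℝ^m` the matrix `C ⊗ X + M ⊗ Y` acts as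
`e_j ⊗ v ↦ M e_j ⊗ (λ_j X + Y) v` (`pencil_mulVec_vecKron`), and likewise for `X', Y'`. Hence both
systems send that subspace into `span{M e_j} ⊗ ℝ^m`, and the identity follows once
`W = C ⊗ X' + M ⊗ Y'` is known to be invertible. By `M`-orthonormality the `M e_j` form a basis
dual to the `e_j`, so every vector is a sum of terms `M e_j ⊗ w_j`; each of them is the image under
`W` of `e_j ⊗ (λ_j X' + Y')⁻¹ w_j`, so `W` is surjective (`isUnit_pencil`). -/

open Matrix
open scoped Kronecker

/-- Kronecker (tensor) product of two vectors: `(e ⊗ v)_{(i,a)} = e_i v_a`. -/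
def vecKron {N m : Type*} (e : N → ℝ) (v : m → ℝ) : N × m → ℝ :=
  fun p => e p.1 * v p.2

lemma kronecker_mulVec_vecKron {N m : ℕ} (A : Matrix (Fin N) (Fin N) ℝ)
    (B : Matrix (Fin m) (Fin m) ℝ) (u : Fin N → ℝ) (v : Fin m → ℝ) :
    (A ⊗ₖ B) *ᵥ vecKron u v = vecKron (A *ᵥ u) (B *ᵥ v) := by
  ext ⟨i, a⟩
  simp only [vecKron, mulVec, dotProduct, kroneckerMap_apply, Fintype.sum_prod_type,
    Finset.sum_mul_sum]
  exact Finset.sum_congr rfl fun _ _ => Finset.sum_congr rfl fun _ _ => by ring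

lemma pencil_mulVec_vecKron {N m : ℕ} {C M : Matrix (Fin N) (Fin N) ℝ} {u : Fin N → ℝ} {μ : ℝ}
    (h : C *ᵥ u = μ • (M *ᵥ u)) (X Y : Matrix (Fin m) (Fin m) ℝ) (v : Fin m → ℝ) :
    (C ⊗ₖ X + M ⊗ₖ Y) *ᵥ vecKron u v = vecKron (M *ᵥ u) ((μ • X + Y) *ᵥ v) := by
  rw [add_mulVec, kronecker_mulVec_vecKron, kronecker_mulVec_vecKron, h, add_mulVec, smul_mulVec]
  ext ⟨i, a⟩
  simp only [vecKron, Pi.add_apply, Pi.smul_apply, smul_eq_mul]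
  ring

/-- `M`-orthonormality says that `e_1, …, e_N` and `M e_1, …, M e_N` are dual bases; this is the
resulting resolution of the identity `∑ j, (M e_j) e_jᵀ = 1`. -/
lemma sum_mulVec_mul_eq_one {N : ℕ} {M : Matrix (Fin N) (Fin N) ℝ} {e : Fin N → Fin N → ℝ}
    (hortho : ∀ j k, e j ⬝ᵥ (M *ᵥ e k) = if j = k then (1 : ℝ) else 0) (i k : Fin N) :
    ∑ j, (M *ᵥ e j) i * e j k = (1 : Matrix (Fin N) (Fin N) ℝ) i k := by
  have h : (Matrix.of e) * (Matrix.of fun i j => (M *ᵥ e j) i) = 1 := by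
    ext j k
    rw [one_apply, ← hortho j k]
    rfl
  -- A left inverse of a square matrix is a right inverse.
  rw [← mul_eq_one_comm.mp h]
  rfl

lemma isUnit_pencil {N m : ℕ} {C M : Matrix (Fin N) (Fin N) ℝ}
    {e : Fin N → Fin N → ℝ} {lam : Fin N → ℝ}
    (heig : ∀ j, C *ᵥ e j = lam j • (M *ᵥ e j))
    (hortho : ∀ j k, e j ⬝ᵥ (M *ᵥ e k) = if j = k then (1 : ℝ) else 0)
    {X Y : Matrix (Fin m) (Fin m) ℝ} (hinv : ∀ j, IsUnit (lam j • X + Y)) :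
    IsUnit (C ⊗ₖ X + M ⊗ₖ Y) := by
  rw [← mulVec_surjective_iff_isUnit]
  intro w
  -- The coefficient of `M e_j` in `w` is `w_j = (e_jᵀ ⊗ 1) w`.
  refine ⟨∑ j, vecKron (e j) ((lam j • X + Y)⁻¹ *ᵥ fun a => ∑ k, e j k * w (k, a)), ?_⟩
  rw [mulVec_sum]
  simp only [pencil_mulVec_vecKron (heig _), mulVec_mulVec,
    mul_nonsing_inv _ ((isUnit_iff_isUnit_det _).mp (hinv _)), one_mulVec]
  ext ⟨i, a⟩
  simp only [Finset.sum_apply, vecKron, Finset.mul_sum]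
  rw [Finset.sum_comm]
  simp only [← mul_assoc, ← Finset.sum_mul, sum_mulVec_mul_eq_one hortho, one_apply, ite_mul,
    one_mul, zero_mul, Finset.sum_ite_eq, Finset.mem_univ, if_true]

/-- **Invariance of the vertical eigenspaces under the preconditioned operator.**
Given generalized eigen-data for `(C, M)` and matrices `X, Y, X', Y'` with each
`λ_j X' + Y'` invertible,
`(C ⊗ X' + M ⊗ Y')⁻¹ (C ⊗ X + M ⊗ Y)(e_j ⊗ v) = e_j ⊗ ((λ_j X' + Y')⁻¹ (λ_j X + Y) v)`. -/
theorem eigenspace_invariance_preconditioned_operator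
    (N m : ℕ) (hN : 1 ≤ N) (hm : 1 ≤ m)
    (C M : Matrix (Fin N) (Fin N) ℝ)
    (e : Fin N → Fin N → ℝ) (lam : Fin N → ℝ)
    (heig : ∀ j, C *ᵥ e j = lam j • (M *ᵥ e j))
    (hortho : ∀ j k, e j ⬝ᵥ (M *ᵥ e k) = if j = k then (1 : ℝ) else 0)
    (X Y X' Y' : Matrix (Fin m) (Fin m) ℝ)
    (hinv : ∀ j, IsUnit (lam j • X' + Y')) :
    ∀ (j : Fin N) (v : Fin m → ℝ),
      (C ⊗ₖ X' + M ⊗ₖ Y')⁻¹ *ᵥ ((C ⊗ₖ X + M ⊗ₖ Y) *ᵥ vecKron (e j) v)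
        = vecKron (e j) ((lam j • X' + Y')⁻¹ *ᵥ ((lam j • X + Y) *ᵥ v)) := by
  intro j v
  have hW := (isUnit_iff_isUnit_det _).mp (isUnit_pencil heig hortho hinv)
  have hD := (isUnit_iff_isUnit_det _).mp (hinv j)
  have key : (C ⊗ₖ X + M ⊗ₖ Y) *ᵥ vecKron (e j) v = (C ⊗ₖ X' + M ⊗ₖ Y') *ᵥ
      vecKron (e j) ((lam j • X' + Y')⁻¹ *ᵥ ((lam j • X + Y) *ᵥ v)) := by
    rw [pencil_mulVec_vecKron (heig j), pencil_mulVec_vecKron (heig j),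
      mulVec_mulVec _ (lam j • X' + Y'), mul_nonsing_inv _ hD, one_mulVec]
  rw [key, mulVec_mulVec, nonsing_inv_mul _ hW, one_mulVec]
end

section
/- Three-dimensional smoothing property from the two-dimensional ones. Let N, m ≥ 1, let C and M be real symmetric N×N matrices with generalized eigen-data: vectors e_1,…,e_N ∈ ℝ^N and reals λ_1,…,λ_N such that C e_j = λ_j M e_j for all j and e_j^T M e_k = δ_{jk} for all j,k. Let X, Y, X', Y' be real symmetric m×m matrices and assume that for every j the Loewner inequality λ_j X + Y ≼ λ_j X' + Y' holds. Then C ⊗ X + M ⊗ Y ≼ C ⊗ X' + M ⊗ Y'. -/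
/-!
Let `F` be the matrix with rows `fⱼ = M eⱼ`. Orthonormality says that `F` is the inverse of the
matrix with columns `eⱼ`, which gives the simultaneous decompositions `M = ∑ⱼ fⱼ fⱼᵀ` and
`C = ∑ⱼ λⱼ fⱼ fⱼᵀ`. Hence
`C ⊗ X' + M ⊗ Y' - (C ⊗ X + M ⊗ Y) = ∑ⱼ (fⱼ fⱼᵀ) ⊗ (λⱼ X' + Y' - (λⱼ X + Y))`,
a sum of Kronecker products of positive semidefinite matrices.
-/

open Matrix
open scoped Kronecker

/-- **Three-dimensional smoothing property from the two-dimensional ones.**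
Given symmetric `C`, `M` with generalized eigen-data and symmetric `X, Y, X', Y'` such that
`λ_j X + Y ≼ λ_j X' + Y'` in the Loewner order for every `j`, one has
`C ⊗ X + M ⊗ Y ≼ C ⊗ X' + M ⊗ Y'`. -/
theorem smoothing_property_3d_from_2d
    (N m : ℕ) (hN : 1 ≤ N) (hm : 1 ≤ m)
    (C M : Matrix (Fin N) (Fin N) ℝ)
    (hCsymm : C.IsSymm) (hMsymm : M.IsSymm)
    (e : Fin N → Fin N → ℝ) (lam : Fin N → ℝ)
    (heig : ∀ j, C *ᵥ e j = lam j • (M *ᵥ e j))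
    (hortho : ∀ j k, e j ⬝ᵥ (M *ᵥ e k) = if j = k then (1 : ℝ) else 0)
    (X Y X' Y' : Matrix (Fin m) (Fin m) ℝ)
    (hXsymm : X.IsSymm) (hYsymm : Y.IsSymm) (hX'symm : X'.IsSymm) (hY'symm : Y'.IsSymm)
    (hloewner : ∀ j, ((lam j • X' + Y') - (lam j • X + Y)).PosSemidef) :
    ((C ⊗ₖ X' + M ⊗ₖ Y') - (C ⊗ₖ X + M ⊗ₖ Y)).PosSemidef := by
  set E : Matrix (Fin N) (Fin N) ℝ := Matrix.of e with hE
  set F : Matrix (Fin N) (Fin N) ℝ := E * M with hF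
  have hFT : Fᵀ = M * Eᵀ := by rw [hF, transpose_mul, hMsymm.eq]
  have hFE : F * Eᵀ = 1 := by
    ext j k
    rw [hF, Matrix.mul_assoc, one_apply, ← hortho j k]
    rfl
  -- A one-sided inverse of a square matrix is two-sided.
  have hEF : Eᵀ * F = 1 := mul_eq_one_comm.mp hFE
  have hM : M = Fᵀ * F := by
    rw [hFT, Matrix.mul_assoc, hEF, Matrix.mul_one]
  have hCE : C * Eᵀ = Fᵀ * diagonal lam := by
    ext a j
    rw [hFT, mul_diagonal, mul_comm]
    exact congrFun (heig j) a
  have hC : C = Fᵀ * diagonal lam * F := by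
    rw [← hCE, Matrix.mul_assoc, hEF, Matrix.mul_one]
  have hdecomp : (C ⊗ₖ X' + M ⊗ₖ Y') - (C ⊗ₖ X + M ⊗ₖ Y) =
      ∑ j, vecMulVec (F j) (F j) ⊗ₖ ((lam j • X' + Y') - (lam j • X + Y)) := by
    ext ⟨a, p⟩ ⟨b, q⟩
    have hMab : M a b = ∑ j, F j a * F j b := by
      conv_lhs => rw [hM]
      rfl
    have hCab : C a b = ∑ j, F j a * lam j * F j b := by
      conv_lhs => rw [hC]
      simp only [mul_apply (N := F), mul_diagonal, transpose_apply]
    simp only [Matrix.sub_apply, Matrix.add_apply, kronecker_apply, Matrix.sum_apply,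
      vecMulVec_apply, Matrix.smul_apply, smul_eq_mul]
    rw [hMab, hCab]
    simp only [Finset.sum_mul, ← Finset.sum_add_distrib, ← Finset.sum_sub_distrib]
    exact Finset.sum_congr rfl fun j _ => by ring
  rw [hdecomp]
  refine posSemidef_sum _ fun j _ => PosSemidef.kronecker ?_ (hloewner j)
  simpa using posSemidef_vecMulVec_self_star (F j)
end

section
/- Three-dimensional approximation property from the two-dimensional ones. Let N, m_f, m_c ≥ 1, let C and M be real symmetric N×N matrices with generalized eigen-data: vectors e_1,…,e_N ∈ ℝ^N and reals λ_1,…,λ_N such that C e_j = λ_j M e_j for all j and e_j^T M e_k = δ_{jk} for all j,k. Let X_f, Y_f, X', Y' be real symmetric m_f×m_f matrices, X_c, Y_c real symmetric m_c×m_c matrices, and P a real m_f×m_c matrix; assume that λ_j X_f + Y_f, λ_j X_c + Y_c and λ_j X' + Y' are invertible for every j. Let C_A ≥ 0 and assume for every j the Loewner inequalities 0 ≼ (λ_j X_f + Y_f)^{−1} − P (λ_j X_c + Y_c)^{−1} P^T ≼ C_A (λ_j X' + Y')^{−1}. Then 0 ≼ (C ⊗ X_f + M ⊗ Y_f)^{−1}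 − (Id_N ⊗ P)(C ⊗ X_c + M ⊗ Y_c)^{−1}(Id_N ⊗ P)^T ≼ C_A (C ⊗ X' + M ⊗ Y')^{−1}. -/
/-!
The matrix `E` with columns `e_j` satisfies `Eᵀ M E = 1`, hence `∑ j, M e_j e_jᵀ = M E Eᵀ = 1`. Together
with `C e_j = λ_j M e_j` this yields the explicit inverse
`(C ⊗ X + M ⊗ Y)⁻¹ = ∑ j, (e_j e_jᵀ) ⊗ (λ_j X + Y)⁻¹` (`inv_kronecker_pencil`).
Conjugating a term by `Id ⊗ P` only affects its second factor, so each of the two matrices in the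
conclusion is `∑ j, (e_j e_jᵀ) ⊗ D_j` with `D_j` the corresponding matrix in the hypotheses. Such a
sum is positive semidefinite because Kronecker products of positive semidefinite matrices are.
-/

open Matrix
open scoped Kronecker

/-- Completeness relation dual to the `M`-orthonormality of the `e j`. -/
lemma sum_mul_vecMulVec_eq_one {n : Type*} [Fintype n] [DecidableEq n]
    (M : Matrix n n ℝ) (e : n → n → ℝ)
    (hortho : ∀ j k, e j ⬝ᵥ (M *ᵥ e k) = if j = k then (1 : ℝ) else 0) :
    ∑ j, M * vecMulVec (e j) (e j) = 1 := by
  -- `F` has the `e j` as rows, so it is the transpose of `E`.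
  let F : Matrix n n ℝ := Matrix.of e
  have hF : F * (M * Fᵀ) = 1 := by
    ext j k
    have h := hortho j k
    simpa [F, Matrix.mul_apply, dotProduct, mulVec, Matrix.one_apply] using h
  have hF2 : M * (Fᵀ * F) = 1 := by
    rw [← Matrix.mul_assoc]
    exact mul_eq_one_comm.mp hF
  have hsum : ∑ j, vecMulVec (e j) (e j) = Fᵀ * F := by
    ext a b
    simp [F, Matrix.sum_apply, Matrix.mul_apply, vecMulVec_apply]
  rw [← Matrix.mul_sum, hsum, hF2]

/-- Separation of variables: simultaneous diagonalization of `(C, M)` gives the inverse of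
`C ⊗ X + M ⊗ Y` in terms of the inverses of the blocks `λ_j X + Y`. -/
lemma inv_kronecker_pencil {n m : Type*} [Fintype n] [DecidableEq n] [Fintype m] [DecidableEq m]
    (C M : Matrix n n ℝ) (e : n → n → ℝ) (lam : n → ℝ)
    (heig : ∀ j, C *ᵥ e j = lam j • (M *ᵥ e j))
    (hortho : ∀ j k, e j ⬝ᵥ (M *ᵥ e k) = if j = k then (1 : ℝ) else 0)
    (X Y : Matrix m m ℝ) (hinv : ∀ j, IsUnit (lam j • X + Y)) :
    (C ⊗ₖ X + M ⊗ₖ Y)⁻¹ = ∑ j, vecMulVec (e j) (e j) ⊗ₖ (lam j • X + Y)⁻¹ := by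
  apply Matrix.inv_eq_right_inv
  have hterm : ∀ j, (C ⊗ₖ X + M ⊗ₖ Y) * (vecMulVec (e j) (e j) ⊗ₖ (lam j • X + Y)⁻¹)
      = (M * vecMulVec (e j) (e j)) ⊗ₖ (1 : Matrix m m ℝ) := by
    intro j
    have hC : C * vecMulVec (e j) (e j) = lam j • (M * vecMulVec (e j) (e j)) := by
      rw [mul_vecMulVec, mul_vecMulVec, heig, smul_vecMulVec]
    have hB : (lam j • X + Y) * (lam j • X + Y)⁻¹ = 1 :=
      Matrix.mul_nonsing_inv _ ((Matrix.isUnit_iff_isUnit_det _).mp (hinv j))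
    rw [Matrix.add_mul, ← mul_kronecker_mul, ← mul_kronecker_mul, hC, smul_kronecker,
      ← kronecker_smul, ← kronecker_add, ← Matrix.smul_mul, ← Matrix.add_mul, hB]
  have hone := sum_mul_vecMulVec_eq_one M e hortho
  rw [Matrix.mul_sum, Finset.sum_congr rfl fun j _ => hterm j]
  calc ∑ j, (M * vecMulVec (e j) (e j)) ⊗ₖ (1 : Matrix m m ℝ)
      = (∑ j, M * vecMulVec (e j) (e j)) ⊗ₖ (1 : Matrix m m ℝ) := by
        ext a b
        simp only [Matrix.sum_apply, kroneckerMap_apply, Finset.sum_mul]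
    _ = 1 := by rw [hone, one_kronecker_one]

lemma posSemidef_sum_vecMulVec_kronecker {n m : Type*} [Fintype n] [Fintype m]
    (e : n → n → ℝ) (D : n → Matrix m m ℝ) (hD : ∀ j, (D j).PosSemidef) :
    (∑ j, vecMulVec (e j) (e j) ⊗ₖ D j).PosSemidef := by
  classical
  refine Matrix.posSemidef_sum _ fun j _ => PosSemidef.kronecker ?_ (hD j)
  simpa using posSemidef_vecMulVec_self_star (e j)

/-- **Three-dimensional approximation property from the two-dimensional ones.**
If, for every `j`,
`0 ≼ (λ_j X_f + Y_f)⁻¹ − P (λ_j X_c + Y_c)⁻¹ Pᵀ ≼ C_A (λ_j X' + Y')⁻¹`,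
then
`0 ≼ (C ⊗ X_f + M ⊗ Y_f)⁻¹ − (Id ⊗ P)(C ⊗ X_c + M ⊗ Y_c)⁻¹(Id ⊗ P)ᵀ
   ≼ C_A (C ⊗ X' + M ⊗ Y')⁻¹`. -/
theorem approximation_property_3d_from_2d
    (N mf mc : ℕ) (hN : 1 ≤ N) (hmf : 1 ≤ mf) (hmc : 1 ≤ mc)
    (C M : Matrix (Fin N) (Fin N) ℝ)
    (hCsymm : C.IsSymm) (hMsymm : M.IsSymm)
    (e : Fin N → Fin N → ℝ) (lam : Fin N → ℝ)
    (heig : ∀ j, C *ᵥ e j = lam j • (M *ᵥ e j))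
    (hortho : ∀ j k, e j ⬝ᵥ (M *ᵥ e k) = if j = k then (1 : ℝ) else 0)
    (Xf Yf X' Y' : Matrix (Fin mf) (Fin mf) ℝ)
    (hXfsymm : Xf.IsSymm) (hYfsymm : Yf.IsSymm) (hX'symm : X'.IsSymm) (hY'symm : Y'.IsSymm)
    (Xc Yc : Matrix (Fin mc) (Fin mc) ℝ)
    (hXcsymm : Xc.IsSymm) (hYcsymm : Yc.IsSymm)
    (P : Matrix (Fin mf) (Fin mc) ℝ)
    (hfinv : ∀ j, IsUnit (lam j • Xf + Yf))
    (hcinv : ∀ j, IsUnit (lam j • Xc + Yc))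
    (hWinv : ∀ j, IsUnit (lam j • X' + Y'))
    (CA : ℝ) (hCA : 0 ≤ CA)
    (happrox1 : ∀ j,
      ((lam j • Xf + Yf)⁻¹ - P * (lam j • Xc + Yc)⁻¹ * Pᵀ).PosSemidef)
    (happrox2 : ∀ j,
      (CA • (lam j • X' + Y')⁻¹
        - ((lam j • Xf + Yf)⁻¹ - P * (lam j • Xc + Yc)⁻¹ * Pᵀ)).PosSemidef) :
    ((C ⊗ₖ Xf + M ⊗ₖ Yf)⁻¹
      - ((1 : Matrix (Fin N) (Fin N) ℝ) ⊗ₖ P) * (C ⊗ₖ Xc + M ⊗ₖ Yc)⁻¹ *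
          ((1 : Matrix (Fin N) (Fin N) ℝ) ⊗ₖ P)ᵀ).PosSemidef ∧
    (CA • (C ⊗ₖ X' + M ⊗ₖ Y')⁻¹
      - ((C ⊗ₖ Xf + M ⊗ₖ Yf)⁻¹
          - ((1 : Matrix (Fin N) (Fin N) ℝ) ⊗ₖ P) * (C ⊗ₖ Xc + M ⊗ₖ Yc)⁻¹ *
              ((1 : Matrix (Fin N) (Fin N) ℝ) ⊗ₖ P)ᵀ)).PosSemidef := by
  have hcoarse : ((1 : Matrix (Fin N) (Fin N) ℝ) ⊗ₖ P) * (C ⊗ₖ Xc + M ⊗ₖ Yc)⁻¹ *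
      ((1 : Matrix (Fin N) (Fin N) ℝ) ⊗ₖ P)ᵀ
      = ∑ j, vecMulVec (e j) (e j) ⊗ₖ (P * (lam j • Xc + Yc)⁻¹ * Pᵀ) := by
    have ht : ((1 : Matrix (Fin N) (Fin N) ℝ) ⊗ₖ P)ᵀ = (1 : Matrix (Fin N) (Fin N) ℝ) ⊗ₖ Pᵀ := by
      rw [← kroneckerMap_transpose, transpose_one]
    rw [inv_kronecker_pencil C M e lam heig hortho Xc Yc hcinv, ht, Matrix.mul_sum, Matrix.sum_mul]
    refine Finset.sum_congr rfl fun j _ => ?_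
    rw [← mul_kronecker_mul, ← mul_kronecker_mul, Matrix.one_mul, Matrix.mul_one]
  have hsub : ∀ A B : Fin N → Matrix (Fin mf) (Fin mf) ℝ,
      ∑ j, vecMulVec (e j) (e j) ⊗ₖ A j - ∑ j, vecMulVec (e j) (e j) ⊗ₖ B j
        = ∑ j, vecMulVec (e j) (e j) ⊗ₖ (A j - B j) := by
    intro A B
    ext a b
    simp only [Matrix.sub_apply, Matrix.sum_apply, kroneckerMap_apply, mul_sub,
      Finset.sum_sub_distrib]
  rw [hcoarse, inv_kronecker_pencil C M e lam heig hortho Xf Yf hfinv,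
    inv_kronecker_pencil C M e lam heig hortho X' Y' hWinv, hsub, Finset.smul_sum]
  simp only [← kronecker_smul]
  rw [hsub]
  exact ⟨posSemidef_sum_vecMulVec_kronecker e _ happrox1,
    posSemidef_sum_vecMulVec_kronecker e _ happrox2⟩
end

section
/- Convergence rate of the Richardson iteration preconditioned by V-cycles for a perturbed operator. Let A⊗ be a real symmetric positive definite n×n matrix and define the energy norm ‖x‖_* := sqrt(x^T A⊗ x) on ℝ^n. Let δA and M⊗ be real n×n matrices, let μ ≥ 1 be an integer, and let Δ ≥ 0 and ρ ≥ 0 be real numbers such that for all x ∈ ℝ^n: ‖(A⊗)^{−1}(δA x)‖_* ≤ Δ‖x‖_* and ‖M⊗ x‖_* ≤ ρ‖x‖_*. Set A := A⊗ + δA and let E := Id − (Id − (M⊗)^μ)(A⊗)^{−1}A be the error propagation matrix of the Richardson iteration for A preconditioned with μ multigrid V-cycles for A⊗. Then for all x ∈ ℝ^n: ‖E x‖_* ≤ (Δ + (1 + Δ)ρ^μ)‖x‖_*. -/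
/-!
Write `y = A⊗⁻¹ δA x`. Since `A⊗⁻¹ (A⊗ + δA) x = x + y`, the error propagation is
`E x = M^μ (x + y) - y`. The bound follows from the triangle inequality, `‖y‖ ≤ Δ‖x‖` and
`‖M^μ z‖ ≤ ρ^μ ‖z‖`. The triangle inequality for the energy norm (`energyNorm_add_le`) comes from
factoring `A⊗ = Bᵀ B`, which turns `‖x‖_*` into the Euclidean norm of `B x`.
-/

open Matrix

/-- The energy norm `‖x‖_* = sqrt(xᵀ A x)` induced by a matrix `A`. -/
noncomputable def energyNorm {n : ℕ} (A : Matrix (Fin n) (Fin n) ℝ) (x : Fin n → ℝ) : ℝ :=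
  Real.sqrt (x ⬝ᵥ (A *ᵥ x))

lemma energyNorm_eq_norm {n : ℕ} (B : Matrix (Fin n) (Fin n) ℝ) (x : Fin n → ℝ) :
    energyNorm (Bᴴ * B) x = ‖WithLp.toLp 2 (B *ᵥ x)‖ := by
  rw [energyNorm, EuclideanSpace.norm_eq, ← mulVec_mulVec, dotProduct_mulVec,
    conjTranspose_eq_transpose_of_trivial, vecMul_transpose]
  simp [dotProduct, sq]

open scoped MatrixOrder Matrix.Norms.L2Operator in
lemma energyNorm_add_le {n : ℕ} {A : Matrix (Fin n) (Fin n) ℝ} (hA : A.PosSemidef)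
    (x y : Fin n → ℝ) : energyNorm A (x + y) ≤ energyNorm A x + energyNorm A y := by
  obtain ⟨B, hB⟩ := CStarAlgebra.nonneg_iff_eq_star_mul_self.mp hA.nonneg
  rw [star_eq_conjTranspose] at hB
  subst hB
  simp only [energyNorm_eq_norm, mulVec_add, WithLp.toLp_add]
  exact norm_add_le _ _

lemma energyNorm_neg {n : ℕ} (A : Matrix (Fin n) (Fin n) ℝ) (x : Fin n → ℝ) :
    energyNorm A (-x) = energyNorm A x := by
  simp [energyNorm, mulVec_neg]

lemma energyNorm_pow_mulVec_le {n : ℕ} {A M : Matrix (Fin n) (Fin n) ℝ} {ρ : ℝ} (hρ : 0 ≤ ρ)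
    (hM : ∀ x : Fin n → ℝ, energyNorm A (M *ᵥ x) ≤ ρ * energyNorm A x) (k : ℕ)
    (x : Fin n → ℝ) : energyNorm A (M ^ k *ᵥ x) ≤ ρ ^ k * energyNorm A x := by
  induction k with
  | zero => simp
  | succ k ih =>
    rw [pow_succ', ← mulVec_mulVec, pow_succ', mul_assoc]
    exact (hM _).trans (mul_le_mul_of_nonneg_left ih hρ)

/-- **Convergence rate of the Richardson iteration preconditioned by V-cycles for a
perturbed operator.** With `A = A⊗ + δA`, `‖(A⊗)⁻¹ δA x‖_* ≤ Δ‖x‖_*` and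
`‖M⊗ x‖_* ≤ ρ‖x‖_*` in the `A⊗`-energy norm, the error propagation matrix
`E = Id − (Id − (M⊗)^μ)(A⊗)⁻¹ A` satisfies `‖E x‖_* ≤ (Δ + (1+Δ)ρ^μ)‖x‖_*`. -/
theorem richardson_vcycle_preconditioned_rate
    (n : ℕ) (Akron : Matrix (Fin n) (Fin n) ℝ) (hA : Akron.PosDef)
    (dA Mkron : Matrix (Fin n) (Fin n) ℝ)
    (μ : ℕ) (hμ : 1 ≤ μ)
    (Δ ρ : ℝ) (hΔ : 0 ≤ Δ) (hρ : 0 ≤ ρ)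
    (hpert : ∀ x : Fin n → ℝ, energyNorm Akron (Akron⁻¹ *ᵥ (dA *ᵥ x)) ≤ Δ * energyNorm Akron x)
    (hMG : ∀ x : Fin n → ℝ, energyNorm Akron (Mkron *ᵥ x) ≤ ρ * energyNorm Akron x) :
    ∀ x : Fin n → ℝ,
      energyNorm Akron ((1 - (1 - Mkron ^ μ) * Akron⁻¹ * (Akron + dA)) *ᵥ x)
        ≤ (Δ + (1 + Δ) * ρ ^ μ) * energyNorm Akron x := by
  intro x
  set y := Akron⁻¹ *ᵥ (dA *ᵥ x) with hy
  have hdet : IsUnit Akron.det := hA.det_pos.ne'.isUnit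
  have hE : (1 - (1 - Mkron ^ μ) * Akron⁻¹ * (Akron + dA)) *ᵥ x
      = -y + Mkron ^ μ *ᵥ (x + y) := by
    rw [mul_assoc, mul_add, nonsing_inv_mul _ hdet, sub_mulVec, one_mulVec, ← mulVec_mulVec,
      add_mulVec, one_mulVec, ← mulVec_mulVec, ← hy, sub_mulVec, one_mulVec]
    abel
  have hxy : energyNorm Akron (x + y) ≤ (1 + Δ) * energyNorm Akron x := by
    linarith [energyNorm_add_le hA.posSemidef x y, hpert x]
  calc energyNorm Akron ((1 - (1 - Mkron ^ μ) * Akron⁻¹ * (Akron + dA)) *ᵥ x)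
      ≤ energyNorm Akron y + energyNorm Akron (Mkron ^ μ *ᵥ (x + y)) := by
        rw [hE, ← energyNorm_neg Akron y]
        exact energyNorm_add_le hA.posSemidef _ _
    _ ≤ Δ * energyNorm Akron x + ρ ^ μ * ((1 + Δ) * energyNorm Akron x) :=
        add_le_add (hpert x) ((energyNorm_pow_mulVec_le hρ hMG μ _).trans
          (mul_le_mul_of_nonneg_left hxy (pow_nonneg hρ μ)))
    _ = (Δ + (1 + Δ) * ρ ^ μ) * energyNorm Akron x := by ring
end

section
/- Convergence of the preconditioned Richardson iteration with a single V-cycle under a small perturbation. Let A⊗ be a real symmetric positive definite n×n matrix with energy norm ‖x‖_* := sqrt(x^T A⊗ x). Let δA and M⊗ be real n×n matrices and Δ, ρ real numbers with Δ ≥ 0 and 0 ≤ ρ < 1, such that for all x ∈ ℝ^n: ‖(A⊗)^{−1}(δA x)‖_* ≤ Δ‖x‖_* and ‖M⊗ x‖_* ≤ ρ‖x‖_*. Set A := A⊗ + δA and E := Id − (Id − M⊗)(A⊗)^{−1}A. If Δ < (1 − ρ)/(1 + ρ), then Δ + (1 + Δ)ρ < 1 and for all x ∈ ℝ^n: ‖E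 x‖_* ≤ (Δ + (1 + Δ)ρ)‖x‖_*; in particular the preconditioned Richardson iteration with one V-cycle per step converges with rate strictly less than 1. -/
/-!
Write `d = (A⊗)⁻¹ δA x`. Since `(A⊗)⁻¹ A = Id + (A⊗)⁻¹ δA`, the error propagation matrix acts as
`E x = M⊗ (x + d) - d`. The energy norm satisfies the triangle inequality, because a factorisation
`A⊗ = Bᵀ B` identifies it with the Euclidean norm of `B x`; hence
`‖E x‖_* ≤ ρ (‖x‖_* + ‖d‖_*) + ‖d‖_* ≤ (ρ (1 + Δ) + Δ) ‖x‖_*`.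
The bound on the rate is a rearrangement of `Δ (1 + ρ) < 1 - ρ`.
-/

open Matrix

/-- The energy norm of a positive definite matrix is a Euclidean norm after a linear change of
coordinates, from which it inherits the triangle inequality. -/
lemma exists_energyNorm_eq_norm {n : ℕ} {A : Matrix (Fin n) (Fin n) ℝ} (hA : A.PosDef) :
    ∃ B : Matrix (Fin n) (Fin n) ℝ, ∀ x, energyNorm A x = ‖WithLp.toLp 2 (B *ᵥ x)‖ := by
  obtain ⟨B, rfl⟩ : ∃ B : Matrix (Fin n) (Fin n) ℝ, A = star B * B := by
    open scoped MatrixOrder Matrix.Norms.L2Operator in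
    exact CStarAlgebra.nonneg_iff_eq_star_mul_self.mp hA.posSemidef.nonneg
  refine ⟨B, fun x => ?_⟩
  rw [energyNorm, EuclideanSpace.norm_eq, star_eq_conjTranspose, conjTranspose_eq_transpose_of_trivial,
    ← mulVec_mulVec, dotProduct_mulVec, vecMul_transpose]
  simp [dotProduct, sq]

/-- **Convergence of the preconditioned Richardson iteration with a single V-cycle under a
small perturbation.** If `Δ < (1−ρ)/(1+ρ)`, then `Δ + (1+Δ)ρ < 1` and the error
propagation matrix `E = Id − (Id − M⊗)(A⊗)⁻¹ A` of the Richardson iteration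
preconditioned with one V-cycle contracts the `A⊗`-energy norm with rate
`Δ + (1+Δ)ρ < 1`. -/
theorem richardson_single_vcycle_preconditioned_convergence
    (n : ℕ) (Akron : Matrix (Fin n) (Fin n) ℝ) (hA : Akron.PosDef)
    (dA Mkron : Matrix (Fin n) (Fin n) ℝ)
    (Δ ρ : ℝ) (hΔ : 0 ≤ Δ) (hρ : 0 ≤ ρ) (hρ1 : ρ < 1)
    (hpert : ∀ x : Fin n → ℝ, energyNorm Akron (Akron⁻¹ *ᵥ (dA *ᵥ x)) ≤ Δ * energyNorm Akron x)
    (hMG : ∀ x : Fin n → ℝ, energyNorm Akron (Mkron *ᵥ x) ≤ ρ * energyNorm Akron x)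
    (hΔcond : Δ < (1 - ρ) / (1 + ρ)) :
    Δ + (1 + Δ) * ρ < 1 ∧
    ∀ x : Fin n → ℝ,
      energyNorm Akron ((1 - (1 - Mkron) * Akron⁻¹ * (Akron + dA)) *ᵥ x)
        ≤ (Δ + (1 + Δ) * ρ) * energyNorm Akron x := by
  refine ⟨?_, fun x => ?_⟩
  · rw [lt_div_iff₀ (by linarith)] at hΔcond
    linarith
  · obtain ⟨B, hB⟩ := exists_energyNorm_eq_norm hA
    have hadd : ∀ u v, energyNorm Akron (u + v) ≤ energyNorm Akron u + energyNorm Akron v := by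
      intro u v
      simp only [hB, mulVec_add, WithLp.toLp_add]
      exact norm_add_le _ _
    have hsub : ∀ u v, energyNorm Akron (u - v) ≤ energyNorm Akron u + energyNorm Akron v := by
      intro u v
      simp only [hB, mulVec_sub, WithLp.toLp_sub]
      exact norm_sub_le _ _
    set d := Akron⁻¹ *ᵥ (dA *ᵥ x) with hd
    have hinv : Akron⁻¹ * Akron = 1 :=
      nonsing_inv_mul _ ((isUnit_iff_isUnit_det _).mp hA.isUnit)
    have hE : (1 - (1 - Mkron) * Akron⁻¹ * (Akron + dA)) *ᵥ x = Mkron *ᵥ (x + d) - d := by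
      rw [Matrix.mul_assoc, Matrix.mul_add, hinv, sub_mulVec, ← mulVec_mulVec, add_mulVec,
        one_mulVec, ← mulVec_mulVec, ← hd, sub_mulVec, one_mulVec]
      abel
    rw [hE]
    calc energyNorm Akron (Mkron *ᵥ (x + d) - d)
        ≤ energyNorm Akron (Mkron *ᵥ (x + d)) + energyNorm Akron d := hsub _ _
      _ ≤ ρ * (energyNorm Akron x + energyNorm Akron d) + energyNorm Akron d := by
          gcongr
          exact (hMG _).trans (by gcongr; exact hadd _ _)
      _ ≤ ρ * (energyNorm Akron x + Δ * energyNorm Akron x) + Δ * energyNorm Akron x := by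
          gcongr <;> exact hpert x
      _ = (Δ + (1 + Δ) * ρ) * energyNorm Akron x := by ring
end

section
/- Positive definiteness of a tensor-product sum in terms of its blocks. Let N, m ≥ 1, let C and M be real symmetric N×N matrices with generalized eigen-data: vectors e_1,…,e_N ∈ ℝ^N and reals λ_1,…,λ_N such that C e_j = λ_j M e_j for all j and e_j^T M e_k = δ_{jk} for all j,k. Let X and Y be real symmetric m×m matrices. Then the (N·m)×(N·m) matrix C ⊗ X + M ⊗ Y is positive definite if and only if λ_j X + Y is positive definite for every j ∈ {1,…,N}. -/
/-!
With `P` the matrix whose columns are the `e j`, the eigen-data say `Pᵀ M P = 1` and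
`Pᵀ C P = diag lam`; in particular `P` is invertible. Congruence by the invertible matrix `P ⊗ 1`
preserves positive definiteness and turns `C ⊗ X + M ⊗ Y` into `diag lam ⊗ X + 1 ⊗ Y`, which up to
reordering the indices is block diagonal with blocks `lam j • X + Y`. A block-diagonal matrix is
positive definite iff all its blocks are (`posDef_blockDiagonal_iff`).
-/

open Matrix
open scoped Kronecker

theorem dotProduct_blockDiagonal_mulVec {ι κ : Type*} [Fintype ι] [DecidableEq ι] [Fintype κ]
    (A : ι → Matrix κ κ ℝ) (x : κ × ι → ℝ) :
    x ⬝ᵥ (blockDiagonal A *ᵥ x) =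
      ∑ j, (fun a => x (a, j)) ⬝ᵥ (A j *ᵥ fun a => x (a, j)) := by
  simp only [dotProduct, mulVec, Fintype.sum_prod_type_right, blockDiagonal_apply, ite_mul,
    zero_mul]
  refine Finset.sum_congr rfl fun j _ => Finset.sum_congr rfl fun a _ => ?_
  rw [Finset.sum_eq_single j]
  · simp
  · intro k _ hk
    simp [hk.symm]
  · simp

theorem posDef_blockDiagonal_iff {ι κ : Type*} [Fintype ι] [DecidableEq ι] [Fintype κ]
    (A : ι → Matrix κ κ ℝ) :
    (blockDiagonal A).PosDef ↔ ∀ j, (A j).PosDef := by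
  constructor
  · intro h j
    have hj := h.submatrix (e := fun a : κ => (a, j)) fun a b hab => congrArg Prod.fst hab
    convert hj using 1
    ext a b
    simp [blockDiagonal_apply]
  · intro h
    refine PosDef.of_dotProduct_mulVec_pos ?_ fun x hx => ?_
    · rw [IsHermitian, blockDiagonal_conjTranspose]
      exact congrArg _ (funext fun j => (h j).isHermitian)
    · rw [star_trivial, dotProduct_blockDiagonal_mulVec]
      obtain ⟨⟨a, j⟩, haj⟩ := Function.ne_iff.mp hx
      refine Finset.sum_pos' (fun k _ => ?_) ⟨j, Finset.mem_univ j, ?_⟩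
      · simpa using (h k).posSemidef.dotProduct_mulVec_nonneg fun a => x (a, k)
      · have hne : (fun a => x (a, j)) ≠ 0 := fun h0 => haj (congrFun h0 a)
        simpa using (h j).dotProduct_mulVec_pos hne

/-- **Positive definiteness of a tensor-product sum in terms of its blocks.**
Given symmetric `C`, `M` with generalized eigen-data and symmetric `X`, `Y`, the matrix
`C ⊗ X + M ⊗ Y` is positive definite iff `λ_j X + Y` is positive definite for every `j`. -/
theorem kronecker_sum_posDef_iff_blocks
    (N m : ℕ) (hN : 1 ≤ N) (hm : 1 ≤ m)
    (C M : Matrix (Fin N) (Fin N) ℝ)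
    (hCsymm : C.IsSymm) (hMsymm : M.IsSymm)
    (e : Fin N → Fin N → ℝ) (lam : Fin N → ℝ)
    (heig : ∀ j, C *ᵥ e j = lam j • (M *ᵥ e j))
    (hortho : ∀ j k, e j ⬝ᵥ (M *ᵥ e k) = if j = k then (1 : ℝ) else 0)
    (X Y : Matrix (Fin m) (Fin m) ℝ)
    (hXsymm : X.IsSymm) (hYsymm : Y.IsSymm) :
    (C ⊗ₖ X + M ⊗ₖ Y).PosDef ↔ ∀ j, (lam j • X + Y).PosDef := by
  set P : Matrix (Fin N) (Fin N) ℝ := (Matrix.of e)ᵀ with hP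
  have hentry : ∀ (B : Matrix (Fin N) (Fin N) ℝ) j k, (Pᵀ * B * P) j k = e j ⬝ᵥ (B *ᵥ e k) := by
    intro B j k
    rw [Matrix.mul_assoc]
    rfl
  have hM : Pᵀ * M * P = 1 := by
    ext j k
    rw [hentry, hortho, one_apply]
  have hC : Pᵀ * C * P = diagonal lam := by
    ext j k
    rw [hentry, heig, dotProduct_smul, hortho, diagonal_apply]
    by_cases h : j = k <;> simp [h]
  have hPunit : IsUnit P := IsUnit.of_mul_eq_one_right _ hM
  have hU : IsUnit (P ⊗ₖ (1 : Matrix (Fin m) (Fin m) ℝ)) := by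
    rw [isUnit_iff_isUnit_det] at hPunit ⊢
    rw [det_kronecker]
    simpa using hPunit.pow _
  have hconj : star (P ⊗ₖ (1 : Matrix (Fin m) (Fin m) ℝ)) * (C ⊗ₖ X + M ⊗ₖ Y) * (P ⊗ₖ 1)
      = (blockDiagonal fun j => lam j • X + Y).submatrix Prod.swap Prod.swap := by
    rw [star_eq_conjTranspose, conjTranspose_kronecker, conjTranspose_one,
      conjTranspose_eq_transpose_of_trivial, Matrix.mul_add, Matrix.add_mul]
    simp only [← mul_kronecker_mul, hC, hM, Matrix.one_mul, Matrix.mul_one]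
    ext ⟨j, a⟩ ⟨k, b⟩
    by_cases h : j = k <;> simp [blockDiagonal_apply, diagonal_apply, one_apply, h]
  rw [← hU.posDef_star_left_conjugate_iff, hconj, ← posDef_blockDiagonal_iff]
  refine ⟨fun h => ?_, fun h => h.submatrix Prod.swap_injective⟩
  simpa using h.submatrix Prod.swap_injective
end
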